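/- (Remark 5(i)) Suppose n is even, λ = 1/2, and p ≥ 1. Then the bilinear map (φ,ψ) ↦ T_p(C^{1/2}_p(S_p φ, S_p ψ)) on A × A is still bidifferential (even though S_p need not be invertible on all of A when n is even). -/

import Mathlib

open MvPolynomial

/-- The polynomial symbol algebra `A = ℂ[u₁,…,uₙ,ξ₁,…,ξₙ]`: variables `Sum.inl i` are the
`uᵢ` and variables `Sum.inr i` are the `ξᵢ`. -/
abbrev PolA (n : ℕ) := MvPolynomial (Fin n ⊕ Fin n) ℂ

namespace LO

/-- ξ-degree of a monomial exponent. -/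
def xiDeg {n : ℕ} (d : (Fin n ⊕ Fin n) →₀ ℕ) : ℕ :=
  ∑ i : Fin n, d (Sum.inr i)

/-- `c(E)`: the operator multiplying the ξ-degree-`m` component by `c m`. -/
noncomputable def cE {n : ℕ} (c : ℕ → ℂ) (φ : PolA n) : PolA n :=
  ∑ d ∈ φ.support, monomial d (c (xiDeg d) * coeff d φ)

/-- `D = Σᵢ ∂²/∂uᵢ∂ξᵢ`. -/
noncomputable def Dop {n : ℕ} (φ : PolA n) : PolA n :=
  ∑ i : Fin n, pderiv (Sum.inl i) (pderiv (Sum.inr i) φ)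

/-- The scalar `h^λ_d(m)`. -/
noncomputable def hScal (n : ℕ) (lam : ℂ) (d m : ℕ) : ℂ :=
  (d.factorial : ℂ)⁻¹ *
    ∏ j ∈ Finset.range d,
      ((m : ℂ) + (j : ℂ) + lam * ((n : ℂ) + 1)) /
        (2 * (m : ℂ) + (j : ℂ) + (n : ℂ) + (d : ℂ))

/-- The scalar `g^λ_d(m)`. -/
noncomputable def gScal (n : ℕ) (lam : ℂ) (d m : ℕ) : ℂ :=
  (d.factorial : ℂ)⁻¹ *
    ∏ j ∈ Finset.range d,
      (-(m : ℂ) - (j : ℂ) - lam * ((n : ℂ) + 1)) /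
        (2 * (m : ℂ) + (j : ℂ) + (n : ℂ) + 1)

/-- `bh^λ_d = h^λ_d(E) ∘ D^d` (equal to the identity for `d = 0`). -/
noncomputable def bh {n : ℕ} (lam : ℂ) (d : ℕ) (φ : PolA n) : PolA n :=
  cE (hScal n lam d) (Dop^[d] φ)

/-- `bg^λ_d = g^λ_d(E) ∘ D^d` (equal to the identity for `d = 0`). -/
noncomputable def bg {n : ℕ} (lam : ℂ) (d : ℕ) (φ : PolA n) : PolA n :=
  cE (gScal n lam d) (Dop^[d] φ)

/-- `N_k(φ,ψ) = (1/k!) Σ_{α ∈ {1,…,n}^k} ∂^kφ/∂ξ_α · ∂^kψ/∂u_α`. -/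
noncomputable def Nop {n : ℕ} (k : ℕ) (φ ψ : PolA n) : PolA n :=
  (k.factorial : ℂ)⁻¹ •
    ∑ α : Fin k → Fin n,
      ((List.ofFn α).foldr (fun i acc => pderiv (Sum.inr i) acc) φ) *
      ((List.ofFn α).foldr (fun i acc => pderiv (Sum.inl i) acc) ψ)

/-- The coefficient `C^λ_p` of the Lecomte–Ovsienko star product. -/
noncomputable def C (n : ℕ) (lam : ℂ) (p : ℕ) (φ ψ : PolA n) : PolA n :=
  ∑ i ∈ Finset.range (p + 1), ∑ j ∈ Finset.range (p + 1),
    ∑ k ∈ Finset.range (p + 1), ∑ m ∈ Finset.range (p + 1),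
      if i + j + k + m = p then bg lam m (Nop k (bh lam i φ) (bh lam j ψ)) else 0

/-- The Poisson bracket `{φ,ψ}`. -/
noncomputable def pb {n : ℕ} (φ ψ : PolA n) : PolA n :=
  ∑ i : Fin n,
    (pderiv (Sum.inr i) φ * pderiv (Sum.inl i) ψ
      - pderiv (Sum.inl i) φ * pderiv (Sum.inr i) ψ)

/-- `φ ∈ A^m` (ξ-homogeneous of degree `m`; for `m < 0` this forces `φ = 0`). -/
def IsXiHomog {n : ℕ} (m : ℤ) (φ : PolA n) : Prop :=
  ∀ d ∈ φ.support, (xiDeg d : ℤ) = m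

/-- The set of spanning momentum functions of the projective `sl_{n+1}(ℝ)`-action. -/
noncomputable def momSet (n : ℕ) : Set (PolA n) :=
  (Set.range fun i : Fin n => (X (Sum.inr i) : PolA n)) ∪
  (Set.range fun ij : Fin n × Fin n =>
    (X (Sum.inl ij.1) * X (Sum.inr ij.2) : PolA n)) ∪
  (Set.range fun i : Fin n =>
    (X (Sum.inl i) * ∑ k : Fin n, X (Sum.inl k) * X (Sum.inr k) : PolA n))

/-- The span `M` of the momentum functions. -/
noncomputable def momSpan (n : ℕ) : Submodule ℂ (PolA n) := Submodule.span ℂ (momSet n)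

/-- The Weyl algebra `W` of differential operators with polynomial coefficients,
as a subalgebra of `End_ℂ(A)`. -/
noncomputable def Weyl (n : ℕ) : Subalgebra ℂ (Module.End ℂ (PolA n)) :=
  Algebra.adjoin ℂ
    ((Set.range fun i : Fin n =>
        (LinearMap.mulLeft ℂ (X (Sum.inl i)) : Module.End ℂ (PolA n))) ∪
     (Set.range fun i : Fin n =>
        (LinearMap.mulLeft ℂ (X (Sum.inr i)) : Module.End ℂ (PolA n))) ∪
     (Set.range fun v : Fin n ⊕ Fin n =>
        ((pderiv v).toLinearMap : Module.End ℂ (PolA n))))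

/-- A bilinear map `B : A × A → A` is bidifferential if it is a finite sum
`B(φ,ψ) = Σ_α A_α(φ)·B_α(ψ)` with `A_α, B_α` in the Weyl algebra. -/
def Bidiff (n : ℕ) (B : PolA n → PolA n → PolA n) : Prop :=
  ∃ (N : ℕ) (Aop Bop : Fin N → Weyl n),
    ∀ φ ψ : PolA n,
      B φ ψ = ∑ α : Fin N,
        (Aop α : Module.End ℂ (PolA n)) φ * (Bop α : Module.End ℂ (PolA n)) ψ

/-- The scalar by which `T_p = ∏_{i=1}^{⌊p/2⌋}(E'+i)` acts on `A^m`. -/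
noncomputable def TScal (n p m : ℕ) : ℂ :=
  ∏ i ∈ Finset.Icc 1 (p / 2), ((m : ℂ) + (n : ℂ) / 2 + (i : ℂ))

/-- The scalar by which `S_p = ∏_{i=1}^{⌊p/2⌋}(E'−i)` acts on `A^m`. -/
noncomputable def SScal (n p m : ℕ) : ℂ :=
  ∏ i ∈ Finset.Icc 1 (p / 2), ((m : ℂ) + (n : ℂ) / 2 - (i : ℂ))

/-- The operator `T_p`. -/
noncomputable def Tp (n p : ℕ) : PolA n → PolA n := cE (TScal n p)

/-- The operator `S_p`. -/
noncomputable def Sp (n p : ℕ) : PolA n → PolA n := cE (SScal n p)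

/-- The fiberwise Euler operator `E = Σ ξᵢ ∂/∂ξᵢ` as an endomorphism. -/
noncomputable def Elin (n : ℕ) : Module.End ℂ (PolA n) :=
  ∑ i : Fin n,
    (LinearMap.mulLeft ℂ (X (Sum.inr i)) : Module.End ℂ (PolA n)) ∘ₗ
      (pderiv (Sum.inr i)).toLinearMap

/-- `E' = E + n/2` as an endomorphism. -/
noncomputable def E'lin (n : ℕ) : Module.End ℂ (PolA n) :=
  Elin n + ((n : ℂ) / 2) • 1

/-- `D` as an endomorphism. -/
noncomputable def Dlin (n : ℕ) : Module.End ℂ (PolA n) :=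
  ∑ i : Fin n,
    ((pderiv (Sum.inl i)).toLinearMap : Module.End ℂ (PolA n)) ∘ₗ
      (pderiv (Sum.inr i)).toLinearMap

/-- `L^{(m)} = −(1/16)(ξ_m∘D − 2E'∘∂/∂u_m)∘D`. -/
noncomputable def Lop (n : ℕ) (m : Fin n) : Module.End ℂ (PolA n) :=
  (-(1 / 16 : ℂ)) •
    (((LinearMap.mulLeft ℂ (X (Sum.inr m)) : Module.End ℂ (PolA n)) ∘ₗ Dlin n
        - (2 : ℂ) • (E'lin n ∘ₗ (pderiv (Sum.inl m)).toLinearMap)) ∘ₗ Dlin n)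

end LO

/-!
At `λ = 1/2` the numerators of `h_d` and `g_d` are, up to sign, `(x + 1/2)_d` with `x = m + n/2`,
and their denominators are `(2x + d)_d` and `(2x + 1)_d`. By the duplication formula
`(2y)_d = 2^d (y)_⌈d/2⌉ (y + 1/2)_⌊d/2⌋`, every factor of the denominators that is a half-integer
shift of `x` cancels against the numerator, and the `⌊d/2⌋` integer shifts of `x` that survive are
factors of `S_p` (moved past `D^d`) and of `T_p`. So `bh_d ∘ S_p` and `T_p ∘ bg_d` have the form
`P(E) ∘ D^d` with `P` a polynomial, and hence lie in the Weyl algebra; composing the bidifferential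
maps `N_k` with them preserves bidifferentiality.
-/

section Pochhammer

variable {R : Type*} [CommSemiring R]

theorem ascPochhammer_eval_add (a b : ℕ) (x : R) :
    (ascPochhammer R (a + b)).eval x =
      (ascPochhammer R a).eval x * (ascPochhammer R b).eval (x + a) := by
  simp [← ascPochhammer_mul]

theorem ascPochhammer_eval_eq_prod_range (k : ℕ) (x : R) :
    (ascPochhammer R k).eval x = ∏ j ∈ Finset.range k, (x + j) := by
  induction k with
  | zero => simp
  | succ k ih => rw [ascPochhammer_succ_eval, Finset.prod_range_succ, ih]

theorem prod_Icc_one_add_eq_ascPochhammer_eval (k : ℕ) (x : R) :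
    ∏ i ∈ Finset.Icc 1 k, (x + i) = (ascPochhammer R k).eval (x + 1) := by
  induction k with
  | zero => simp
  | succ k ih =>
    rw [Finset.prod_Icc_succ_top (by lia), ascPochhammer_succ_eval, ih]
    push_cast
    ring

theorem prod_Icc_one_sub_eq_ascPochhammer_eval {R : Type*} [CommRing R] (k : ℕ) (x : R) :
    ∏ i ∈ Finset.Icc 1 k, (x - i) = (ascPochhammer R k).eval (x - k) := by
  induction k with
  | zero => simp
  | succ k ih =>
    have hshift : x - (k + 1 : ℕ) + 1 = x - k := by
      push_cast
      ring
    rw [Finset.prod_Icc_succ_top (by lia), ascPochhammer_succ_left, Polynomial.eval_mul,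
      Polynomial.eval_X, Polynomial.eval_comp, Polynomial.eval_add, Polynomial.eval_X,
      Polynomial.eval_one, hshift, ih, mul_comm]

variable {K : Type*} [Field K] [CharZero K]

theorem ascPochhammer_eval_two_mul (d : ℕ) (x : K) :
    (ascPochhammer K d).eval (2 * x) =
      2 ^ d * ((ascPochhammer K ((d + 1) / 2)).eval x *
        (ascPochhammer K (d / 2)).eval (x + 1 / 2)) := by
  induction d using Nat.twoStepInduction with
  | zero => simp
  | one => simp
  | more d ih _ =>
    have hfactors : (2 * x + d) * (2 * x + (d + 1 : ℕ)) =
        2 ^ 2 * ((x + ((d + 1) / 2 : ℕ)) * (x + 1 / 2 + (d / 2 : ℕ))) := by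
      obtain ⟨e, rfl | rfl⟩ := d.even_or_odd'
      · rw [show (2 * e + 1) / 2 = e by lia, show 2 * e / 2 = e by lia]
        push_cast
        ring
      · rw [show (2 * e + 1 + 1) / 2 = e + 1 by lia, show (2 * e + 1) / 2 = e by lia]
        push_cast
        ring
    rw [show (d + 2 + 1) / 2 = (d + 1) / 2 + 1 by lia, show (d + 2) / 2 = d / 2 + 1 by lia]
    simp only [ascPochhammer_succ_eval, ih]
    linear_combination (2 ^ d * (ascPochhammer K ((d + 1) / 2)).eval x *
      (ascPochhammer K (d / 2)).eval (x + 1 / 2)) * hfactors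

theorem ascPochhammer_eval_two_mul_add_self (d : ℕ) (x : K) :
    (ascPochhammer K d).eval (2 * x + d) =
      2 ^ d * ((ascPochhammer K (d / 2)).eval (x + ((d + 1) / 2 : ℕ)) *
        (ascPochhammer K ((d + 1) / 2)).eval (x + 1 / 2 + (d / 2 : ℕ))) := by
  rw [show 2 * x + d = 2 * (x + d / 2) by ring, ascPochhammer_eval_two_mul]
  obtain ⟨e, rfl | rfl⟩ := d.even_or_odd'
  · rw [show (2 * e + 1) / 2 = e by lia, show 2 * e / 2 = e by lia]
    push_cast
    ring_nf
  · rw [show (2 * e + 1 + 1) / 2 = e + 1 by lia, show (2 * e + 1) / 2 = e by lia]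
    push_cast
    ring_nf

theorem ascPochhammer_add_half_mul_eq_two_mul_add_self (d : ℕ) (x : K) :
    (ascPochhammer K d).eval (x + 1 / 2) * (ascPochhammer K (d / 2)).eval (x + ((d + 1) / 2 : ℕ)) =
      (1 / 2) ^ d * (ascPochhammer K (d / 2)).eval (x + 1 / 2) *
        (ascPochhammer K d).eval (2 * x + d) := by
  have hsplit : (ascPochhammer K d).eval (x + 1 / 2) =
      (ascPochhammer K (d / 2)).eval (x + 1 / 2) *
        (ascPochhammer K ((d + 1) / 2)).eval (x + 1 / 2 + (d / 2 : ℕ)) := by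
    rw [← ascPochhammer_eval_add, show d / 2 + (d + 1) / 2 = d by lia]
  rw [hsplit, ascPochhammer_eval_two_mul_add_self, one_div_pow]
  field_simp

theorem ascPochhammer_add_half_mul_eq_two_mul_add_one (d : ℕ) (x : K) :
    (ascPochhammer K d).eval (x + 1 / 2) * (ascPochhammer K (d / 2)).eval (x + 1) =
      (1 / 2) ^ d * (ascPochhammer K (d / 2)).eval (x + 1 / 2 + ((d + 1) / 2 : ℕ)) *
        (ascPochhammer K d).eval (2 * x + 1) := by
  have hsplit : (ascPochhammer K d).eval (x + 1 / 2) =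
      (ascPochhammer K ((d + 1) / 2)).eval (x + 1 / 2) *
        (ascPochhammer K (d / 2)).eval (x + 1 / 2 + ((d + 1) / 2 : ℕ)) := by
    rw [← ascPochhammer_eval_add, show (d + 1) / 2 + d / 2 = d by lia]
  rw [hsplit, show 2 * x + 1 = 2 * (x + 1 / 2) by ring, ascPochhammer_eval_two_mul,
    show x + 1 / 2 + 1 / 2 = x + 1 by ring, one_div_pow]
  field_simp

end Pochhammer

namespace LO

variable {n : ℕ}

section FunctionalCalculus

theorem coeff_cE (c : ℕ → ℂ) (φ : PolA n) (d : (Fin n ⊕ Fin n) →₀ ℕ) :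
    coeff d (cE c φ) = c (xiDeg d) * coeff d φ := by
  simp +contextual [cE, coeff_sum, coeff_monomial]

/-- The functional calculus `c ↦ c(E)` of the fiberwise Euler operator, as an algebra homomorphism
from the pointwise algebra of functions on the spectrum `ℕ` of `E`. -/
noncomputable def eulerCalculus (n : ℕ) : (ℕ → ℂ) →ₐ[ℂ] Module.End ℂ (PolA n) :=
  AlgHom.ofLinearMap
    { toFun c :=
        { toFun := cE c
          map_add' φ ψ := by ext d; simp only [coeff_cE, coeff_add, mul_add]
          map_smul' a φ := by
            ext d
            simp only [coeff_cE, coeff_smul, smul_eq_mul, RingHom.id_apply, mul_left_comm] }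
      map_add' c c' := by
        ext φ d
        simp [coeff_cE, add_mul]
      map_smul' a c := by
        ext φ d
        simp [coeff_cE, mul_assoc] }
    (by ext φ d; simp [coeff_cE])
    (fun c c' => by ext φ d; simp [coeff_cE, mul_assoc])

@[simp]
theorem eulerCalculus_apply (c : ℕ → ℂ) (φ : PolA n) : eulerCalculus n c φ = cE c φ := rfl

theorem cE_monomial (c : ℕ → ℂ) (d : (Fin n ⊕ Fin n) →₀ ℕ) (a : ℂ) :
    cE c (monomial d a) = c (xiDeg d) • monomial d a := by
  ext e
  by_cases h : d = e <;> simp [coeff_cE, coeff_monomial, h]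

theorem eulerCalculus_natCast : eulerCalculus n (fun m => (m : ℂ)) = Elin n := by
  refine MvPolynomial.linearMap_ext fun d => LinearMap.ext fun a => ?_
  simp only [LinearMap.comp_apply, eulerCalculus_apply, cE_monomial, Elin, LinearMap.sum_apply,
    LinearMap.mulLeft_apply, Derivation.coeFn_coe, X_mul_pderiv_monomial, ← Finset.sum_smul, xiDeg,
    Nat.cast_smul_eq_nsmul]

theorem eulerCalculus_eval (P : Polynomial ℂ) :
    eulerCalculus n (fun m => P.eval (m : ℂ)) = Polynomial.aeval (Elin n) P := by
  have hP : (fun m : ℕ => P.eval (m : ℂ)) = Polynomial.aeval (fun m : ℕ => (m : ℂ)) P := by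
    ext m
    rw [Polynomial.aeval_fn_apply, Polynomial.coe_aeval_eq_eval]
  rw [hP, ← Polynomial.aeval_algHom_apply, eulerCalculus_natCast]

theorem pderiv_inl_cE (i : Fin n) (c : ℕ → ℂ) (φ : PolA n) :
    pderiv (Sum.inl i) (cE c φ) = cE c (pderiv (Sum.inl i) φ) := by
  ext d
  have hdeg : xiDeg (d + Finsupp.single (Sum.inl i) 1) = xiDeg d := by simp [xiDeg]
  simp only [coeff_pderiv, coeff_cE, hdeg, mul_assoc]

theorem pderiv_inr_cE (i : Fin n) (c : ℕ → ℂ) (φ : PolA n) :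
    pderiv (Sum.inr i) (cE c φ) = cE (fun m => c (m + 1)) (pderiv (Sum.inr i) φ) := by
  ext d
  have hdeg : xiDeg (d + Finsupp.single (Sum.inr i) 1) = xiDeg d + 1 := by
    simp [xiDeg, Finset.sum_add_distrib, Finsupp.single_apply]
  simp only [coeff_pderiv, coeff_cE, hdeg, mul_assoc]

theorem Dlin_mul_eulerCalculus (c : ℕ → ℂ) :
    Dlin n * eulerCalculus n c = eulerCalculus n (fun m => c (m + 1)) * Dlin n := by
  refine LinearMap.ext fun φ => ?_
  simp only [Dlin, Module.End.mul_apply, LinearMap.sum_apply, map_sum, LinearMap.comp_apply,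
    eulerCalculus_apply, Derivation.coeFn_coe, pderiv_inl_cE, pderiv_inr_cE]

theorem Dlin_pow_mul_eulerCalculus (c : ℕ → ℂ) (d : ℕ) :
    Dlin n ^ d * eulerCalculus n c = eulerCalculus n (fun m => c (m + d)) * Dlin n ^ d := by
  induction d generalizing c with
  | zero => simp
  | succ d ih =>
    rw [pow_succ, mul_assoc, Dlin_mul_eulerCalculus, ← mul_assoc, ih, mul_assoc]
    simp only [add_assoc]

theorem iterate_Dop (d : ℕ) (φ : PolA n) : Dop^[d] φ = (Dlin n ^ d) φ := by
  have hD : (Dop : PolA n → PolA n) = Dlin n := by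
    ext1 φ
    simp [Dop, Dlin]
  rw [hD, Module.End.pow_apply]

end FunctionalCalculus

section WeylAlgebra

theorem mulLeft_inl_mem_Weyl (i : Fin n) :
    (LinearMap.mulLeft ℂ (X (Sum.inl i)) : Module.End ℂ (PolA n)) ∈ Weyl n :=
  Algebra.subset_adjoin (Or.inl (Or.inl ⟨i, rfl⟩))

theorem mulLeft_inr_mem_Weyl (i : Fin n) :
    (LinearMap.mulLeft ℂ (X (Sum.inr i)) : Module.End ℂ (PolA n)) ∈ Weyl n :=
  Algebra.subset_adjoin (Or.inl (Or.inr ⟨i, rfl⟩))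

theorem pderiv_mem_Weyl (v : Fin n ⊕ Fin n) :
    ((pderiv v).toLinearMap : Module.End ℂ (PolA n)) ∈ Weyl n :=
  Algebra.subset_adjoin (Or.inr ⟨v, rfl⟩)

theorem Elin_mem_Weyl : Elin n ∈ Weyl n :=
  Subalgebra.sum_mem _ fun i _ => Subalgebra.mul_mem _ (mulLeft_inr_mem_Weyl i) (pderiv_mem_Weyl _)

theorem Dlin_mem_Weyl : Dlin n ∈ Weyl n :=
  Subalgebra.sum_mem _ fun _ _ => Subalgebra.mul_mem _ (pderiv_mem_Weyl _) (pderiv_mem_Weyl _)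

theorem eulerCalculus_eval_mem_Weyl (P : Polynomial ℂ) :
    eulerCalculus n (fun m => P.eval (m : ℂ)) ∈ Weyl n := by
  rw [eulerCalculus_eval]
  exact Algebra.adjoin_le (Set.singleton_subset_iff.2 Elin_mem_Weyl)
    (Polynomial.aeval_mem_adjoin_singleton ℂ _)

theorem foldr_pderiv_eq_prod {ι : Type*} (v : ι → Fin n ⊕ Fin n) (l : List ι) (φ : PolA n) :
    l.foldr (fun i ψ => pderiv (v i) ψ) φ =
      (l.map fun i => ((pderiv (v i)).toLinearMap : Module.End ℂ (PolA n))).prod φ := by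
  induction l with
  | nil => rfl
  | cons i l ih => simp [ih]

theorem exists_mem_Weyl_foldr_pderiv {ι : Type*} (v : ι → Fin n ⊕ Fin n) (l : List ι) :
    ∃ w ∈ Weyl n, ∀ φ, l.foldr (fun i ψ => pderiv (v i) ψ) φ = w φ :=
  ⟨_, Subalgebra.list_prod_mem _ (by simp [pderiv_mem_Weyl]), foldr_pderiv_eq_prod v l⟩

end WeylAlgebra

section Scalars

theorem TScal_eq_ascPochhammer_eval (p m : ℕ) :
    TScal n p m = (ascPochhammer ℂ (p / 2)).eval ((m : ℂ) + n / 2 + 1) :=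
  prod_Icc_one_add_eq_ascPochhammer_eval _ _

theorem SScal_eq_ascPochhammer_eval (p m : ℕ) :
    SScal n p m = (ascPochhammer ℂ (p / 2)).eval ((m : ℂ) + n / 2 - (p / 2 : ℕ)) :=
  prod_Icc_one_sub_eq_ascPochhammer_eval _ _

theorem hScal_half_eq_div (d m : ℕ) :
    hScal n (1 / 2) d m = (d.factorial : ℂ)⁻¹ *
      ((ascPochhammer ℂ d).eval ((m : ℂ) + n / 2 + 1 / 2) /
        (ascPochhammer ℂ d).eval (2 * ((m : ℂ) + n / 2) + d)) := by
  rw [hScal, ascPochhammer_eval_eq_prod_range, ascPochhammer_eval_eq_prod_range,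
    ← Finset.prod_div_distrib]
  refine congrArg _ (Finset.prod_congr rfl fun j _ => ?_)
  congr 1 <;> ring

theorem gScal_half_eq_div (d m : ℕ) :
    gScal n (1 / 2) d m = (d.factorial : ℂ)⁻¹ *
      ((-1) ^ d * (ascPochhammer ℂ d).eval ((m : ℂ) + n / 2 + 1 / 2) /
        (ascPochhammer ℂ d).eval (2 * ((m : ℂ) + n / 2) + 1)) := by
  have hneg : (-1 : ℂ) ^ d = ∏ _j ∈ Finset.range d, (-1 : ℂ) := by simp
  rw [gScal, ascPochhammer_eval_eq_prod_range, ascPochhammer_eval_eq_prod_range, hneg,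
    ← Finset.prod_mul_distrib, ← Finset.prod_div_distrib]
  refine congrArg _ (Finset.prod_congr rfl fun j _ => ?_)
  congr 1 <;> ring

theorem hScal_half_mul_ascPochhammer_eval (d m : ℕ) :
    hScal n (1 / 2) d m *
        (ascPochhammer ℂ (d / 2)).eval ((m : ℂ) + n / 2 + ((d + 1) / 2 : ℕ)) =
      (d.factorial : ℂ)⁻¹ * (1 / 2) ^ d *
        (ascPochhammer ℂ (d / 2)).eval ((m : ℂ) + n / 2 + 1 / 2) := by
  have hden : (ascPochhammer ℂ d).eval (2 * ((m : ℂ) + n / 2) + d) ≠ 0 := by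
    rw [ascPochhammer_eval_eq_prod_range, Finset.prod_ne_zero_iff]
    intro j hj
    have hpos : 2 * m + n + d + j ≠ 0 := by grind
    convert! (Nat.cast_ne_zero (R := ℂ)).2 hpos using 1
    push_cast
    ring
  rw [hScal_half_eq_div, mul_assoc, div_mul_eq_mul_div,
    ascPochhammer_add_half_mul_eq_two_mul_add_self, mul_div_cancel_right₀ _ hden, mul_assoc]

theorem gScal_half_mul_ascPochhammer_eval (d m : ℕ) :
    gScal n (1 / 2) d m * (ascPochhammer ℂ (d / 2)).eval ((m : ℂ) + n / 2 + 1) =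
      (d.factorial : ℂ)⁻¹ * (-1 / 2) ^ d *
        (ascPochhammer ℂ (d / 2)).eval ((m : ℂ) + n / 2 + 1 / 2 + ((d + 1) / 2 : ℕ)) := by
  have hden : (ascPochhammer ℂ d).eval (2 * ((m : ℂ) + n / 2) + 1) ≠ 0 := by
    rw [ascPochhammer_eval_eq_prod_range, Finset.prod_ne_zero_iff]
    intro j _
    have hpos : 2 * m + n + 1 + j ≠ 0 := by lia
    convert! (Nat.cast_ne_zero (R := ℂ)).2 hpos using 1
    push_cast
    ring
  rw [gScal_half_eq_div, mul_assoc, div_mul_eq_mul_div, mul_assoc,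
    ascPochhammer_add_half_mul_eq_two_mul_add_one, ← mul_assoc, mul_div_cancel_right₀ _ hden,
    ← mul_assoc ((-1) ^ d), ← mul_pow, mul_one_div, ← mul_assoc]

theorem exists_polynomial_hScal_half_mul_SScal {d p : ℕ} (hdp : d ≤ p) :
    ∃ P : Polynomial ℂ, ∀ m : ℕ, hScal n (1 / 2) d m * SScal n p (m + d) = P.eval (m : ℂ) := by
  obtain ⟨r, hr⟩ := Nat.exists_eq_add_of_le' (Nat.div_le_div_right (c := 2) hdp)
  have hd : (d : ℂ) = (d / 2 : ℕ) + ((d + 1) / 2 : ℕ) := by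
    exact_mod_cast (show d = d / 2 + (d + 1) / 2 by lia)
  have hS (m : ℕ) : SScal n p (m + d) =
      (ascPochhammer ℂ (d / 2)).eval ((m : ℂ) + n / 2 + ((d + 1) / 2 : ℕ)) *
        (ascPochhammer ℂ r).eval ((m : ℂ) + n / 2 + ((d + 1) / 2 : ℕ) - r) := by
    rw [SScal_eq_ascPochhammer_eval, hr, ascPochhammer_eval_add, mul_comm]
    congr 2 <;> push_cast <;> linear_combination hd
  refine ⟨.C ((d.factorial : ℂ)⁻¹ * (1 / 2) ^ d) *
    (ascPochhammer ℂ (d / 2)).comp (.X + .C ((n : ℂ) / 2 + 1 / 2)) *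
    (ascPochhammer ℂ r).comp (.X + .C ((n : ℂ) / 2 + ((d + 1) / 2 : ℕ) - r)), fun m => ?_⟩
  rw [hS, ← mul_assoc, hScal_half_mul_ascPochhammer_eval]
  simp only [Polynomial.eval_mul, Polynomial.eval_comp, Polynomial.eval_add, Polynomial.eval_X,
    Polynomial.eval_C, add_assoc, add_sub_assoc]

theorem exists_polynomial_TScal_mul_gScal_half {d p : ℕ} (hdp : d ≤ p) :
    ∃ P : Polynomial ℂ, ∀ m : ℕ, TScal n p m * gScal n (1 / 2) d m = P.eval (m : ℂ) := by
  obtain ⟨r, hr⟩ := Nat.exists_eq_add_of_le (Nat.div_le_div_right (c := 2) hdp)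
  have hT (m : ℕ) : TScal n p m =
      (ascPochhammer ℂ (d / 2)).eval ((m : ℂ) + n / 2 + 1) *
        (ascPochhammer ℂ r).eval ((m : ℂ) + n / 2 + 1 + (d / 2 : ℕ)) := by
    rw [TScal_eq_ascPochhammer_eval, hr, ascPochhammer_eval_add]
  refine ⟨.C ((d.factorial : ℂ)⁻¹ * (-1 / 2) ^ d) *
    (ascPochhammer ℂ (d / 2)).comp (.X + .C ((n : ℂ) / 2 + 1 / 2 + ((d + 1) / 2 : ℕ))) *
    (ascPochhammer ℂ r).comp (.X + .C ((n : ℂ) / 2 + 1 + (d / 2 : ℕ))), fun m => ?_⟩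
  rw [hT, mul_comm, ← mul_assoc, gScal_half_mul_ascPochhammer_eval]
  simp only [Polynomial.eval_mul, Polynomial.eval_comp, Polynomial.eval_add, Polynomial.eval_X,
    Polynomial.eval_C, add_assoc]

end Scalars

section Bidifferential

theorem Bidiff.of_mem_Weyl {a b : Module.End ℂ (PolA n)} (ha : a ∈ Weyl n) (hb : b ∈ Weyl n) :
    Bidiff n (fun φ ψ => a φ * b ψ) :=
  ⟨1, fun _ => ⟨a, ha⟩, fun _ => ⟨b, hb⟩, by simp⟩

theorem Bidiff.zero : Bidiff n 0 :=
  ⟨0, Fin.elim0, Fin.elim0, by simp⟩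

theorem Bidiff.add {B B' : PolA n → PolA n → PolA n} :
    Bidiff n B → Bidiff n B' → Bidiff n (B + B')
  | ⟨N, a, b, hB⟩, ⟨N', a', b', hB'⟩ =>
    ⟨N + N', Fin.append a a', Fin.append b b', fun φ ψ => by simp [hB, hB', Fin.sum_univ_add]⟩

theorem Bidiff.smul (r : ℂ) {B : PolA n → PolA n → PolA n} :
    Bidiff n B → Bidiff n (r • B)
  | ⟨N, a, b, hB⟩ => ⟨N, fun α => r • a α, b, fun φ ψ => by simp [hB, Finset.smul_sum]⟩

theorem Bidiff.sum {ι : Type*} (s : Finset ι) {B : ι → PolA n → PolA n → PolA n}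
    (hB : ∀ i ∈ s, Bidiff n (B i)) : Bidiff n (fun φ ψ => ∑ i ∈ s, B i φ ψ) := by
  simpa only [Finset.sum_fn] using Finset.sum_induction B (Bidiff n) (fun _ _ => .add) .zero hB

theorem Bidiff.mulLeft_comp {f : PolA n} (hf : LinearMap.mulLeft ℂ f ∈ Weyl n)
    {B : PolA n → PolA n → PolA n} : Bidiff n B → Bidiff n (fun φ ψ => f * B φ ψ)
  | ⟨N, a, b, hB⟩ =>
    ⟨N, fun α => ⟨_, hf⟩ * a α, b, fun φ ψ => by simp [hB, Finset.mul_sum, mul_assoc]⟩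

theorem Bidiff.pderiv_comp (v : Fin n ⊕ Fin n) {B : PolA n → PolA n → PolA n} :
    Bidiff n B → Bidiff n (fun φ ψ => pderiv v (B φ ψ))
  | ⟨N, a, b, hB⟩ => by
    have hleft : Bidiff n fun φ ψ =>
        ∑ α, pderiv v ((a α : Module.End ℂ (PolA n)) φ) * (b α : Module.End ℂ (PolA n)) ψ :=
      ⟨N, fun α => ⟨_, pderiv_mem_Weyl v⟩ * a α, b, fun φ ψ => by simp⟩
    have hright : Bidiff n fun φ ψ =>
        ∑ α, (a α : Module.End ℂ (PolA n)) φ * pderiv v ((b α : Module.End ℂ (PolA n)) ψ) :=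
      ⟨N, a, fun α => ⟨_, pderiv_mem_Weyl v⟩ * b α, fun φ ψ => by simp⟩
    convert! hleft.add hright using 3 with φ ψ
    simp [hB, Finset.sum_add_distrib, add_comm, mul_comm]

theorem Bidiff.weyl_comp {w : Module.End ℂ (PolA n)} (hw : w ∈ Weyl n) :
    ∀ {B : PolA n → PolA n → PolA n}, Bidiff n B → Bidiff n (fun φ ψ => w (B φ ψ)) := by
  induction hw using Algebra.adjoin_induction with
  | mem _ hw =>
    rcases hw with (⟨i, rfl⟩ | ⟨i, rfl⟩) | ⟨v, rfl⟩
    · exact .mulLeft_comp (mulLeft_inl_mem_Weyl i)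
    · exact .mulLeft_comp (mulLeft_inr_mem_Weyl i)
    · exact .pderiv_comp v
  | algebraMap r => exact .smul r
  | add _ _ _ _ hw hw' => exact fun hB => (hw hB).add (hw' hB)
  | mul _ _ _ _ hw hw' => exact fun hB => hw (hw' hB)

theorem bidiff_Nop (k : ℕ) {a b : Module.End ℂ (PolA n)} (ha : a ∈ Weyl n) (hb : b ∈ Weyl n) :
    Bidiff n (fun φ ψ => Nop k (a φ) (b ψ)) := by
  have hterm (α : Fin k → Fin n) : Bidiff n fun φ ψ =>
      (List.ofFn α).foldr (fun i χ => pderiv (Sum.inr i) χ) (a φ) *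
        (List.ofFn α).foldr (fun i χ => pderiv (Sum.inl i) χ) (b ψ) := by
    obtain ⟨w, hw, hw_eq⟩ := exists_mem_Weyl_foldr_pderiv (n := n) Sum.inr (List.ofFn α)
    obtain ⟨w', hw', hw'_eq⟩ := exists_mem_Weyl_foldr_pderiv (n := n) Sum.inl (List.ofFn α)
    simpa only [hw_eq, hw'_eq, Module.End.mul_apply] using
      Bidiff.of_mem_Weyl (mul_mem hw ha) (mul_mem hw' hb)
  exact (Bidiff.sum Finset.univ fun α _ => hterm α).smul (k.factorial : ℂ)⁻¹

end Bidifferential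

section StarProduct

theorem exists_mem_Weyl_bh_half_Sp {d p : ℕ} (hdp : d ≤ p) :
    ∃ w ∈ Weyl n, ∀ φ, bh (1 / 2) d (Sp n p φ) = w φ := by
  obtain ⟨P, hP⟩ := exists_polynomial_hScal_half_mul_SScal (n := n) hdp
  refine ⟨_, mul_mem (eulerCalculus_eval_mem_Weyl P) (pow_mem Dlin_mem_Weyl d), fun φ => ?_⟩
  calc bh (1 / 2) d (Sp n p φ)
      = (eulerCalculus n (hScal n (1 / 2) d) * (Dlin n ^ d * eulerCalculus n (SScal n p))) φ := by
        simp [bh, Sp, iterate_Dop]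
    _ = (eulerCalculus n (fun m => P.eval (m : ℂ)) * Dlin n ^ d) φ := by
        rw [Dlin_pow_mul_eulerCalculus, ← mul_assoc, ← map_mul]
        simp only [← hP]
        rfl

theorem exists_mem_Weyl_Tp_bg_half {d p : ℕ} (hdp : d ≤ p) :
    ∃ w ∈ Weyl n, ∀ φ, Tp n p (bg (1 / 2) d φ) = w φ := by
  obtain ⟨P, hP⟩ := exists_polynomial_TScal_mul_gScal_half (n := n) hdp
  refine ⟨_, mul_mem (eulerCalculus_eval_mem_Weyl P) (pow_mem Dlin_mem_Weyl d), fun φ => ?_⟩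
  calc Tp n p (bg (1 / 2) d φ)
      = (eulerCalculus n (TScal n p) * (eulerCalculus n (gScal n (1 / 2) d) * Dlin n ^ d)) φ := by
        simp [bg, Tp, iterate_Dop]
    _ = (eulerCalculus n (fun m => P.eval (m : ℂ)) * Dlin n ^ d) φ := by
        rw [← mul_assoc, ← map_mul]
        simp only [← hP]
        rfl

theorem bidiff_Tp_bg_half_Nop_bh_half_Sp {p i j m : ℕ} (k : ℕ) (hi : i ≤ p) (hj : j ≤ p)
    (hm : m ≤ p) :
    Bidiff n fun φ ψ => Tp n p (bg (1 / 2) m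
      (Nop k (bh (1 / 2) i (Sp n p φ)) (bh (1 / 2) j (Sp n p ψ)))) := by
  obtain ⟨w, hw, hw_eq⟩ := exists_mem_Weyl_Tp_bg_half (n := n) hm
  obtain ⟨a, ha, ha_eq⟩ := exists_mem_Weyl_bh_half_Sp (n := n) hi
  obtain ⟨b, hb, hb_eq⟩ := exists_mem_Weyl_bh_half_Sp (n := n) hj
  simp only [hw_eq, ha_eq, hb_eq]
  exact .weyl_comp hw (bidiff_Nop k ha hb)

theorem Tp_C (lam : ℂ) (p : ℕ) (φ ψ : PolA n) :
    Tp n p (C n lam p φ ψ) =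
      ∑ i ∈ Finset.range (p + 1), ∑ j ∈ Finset.range (p + 1),
        ∑ k ∈ Finset.range (p + 1), ∑ m ∈ Finset.range (p + 1),
          if i + j + k + m = p then Tp n p (bg lam m (Nop k (bh lam i φ) (bh lam j ψ))) else 0 := by
  have hTp (φ : PolA n) : Tp n p φ = eulerCalculus n (TScal n p) φ := rfl
  simp only [C, hTp, map_sum, apply_ite (eulerCalculus n (TScal n p)), map_zero]

end StarProduct

end LO

theorem stmt_19_general (n p : ℕ) :
    LO.Bidiff n
      (fun φ ψ => LO.Tp n p (LO.C n (1 / 2) p (LO.Sp n p φ) (LO.Sp n p ψ))) := by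
  simp only [LO.Tp_C]
  refine .sum _ fun i _ => .sum _ fun j _ => .sum _ fun k _ => .sum _ fun m _ => ?_
  split_ifs with hijkm
  · exact LO.bidiff_Tp_bg_half_Nop_bh_half_Sp k (by lia) (by lia) (by lia)
  · exact .zero

/-- Remark 5(i): for `n` even and `p ≥ 1`, the bilinear map
`(φ,ψ) ↦ T_p(C^{1/2}_p(S_p φ, S_p ψ))` is still bidifferential. -/
theorem stmt_19 (n : ℕ) (hn : 1 ≤ n) (hne : Even n) (p : ℕ) (hp : 1 ≤ p) :
    LO.Bidiff n
      (fun φ ψ => LO.Tp n p (LO.C n (1 / 2) p (LO.Sp n p φ) (LO.Sp n p ψ))) := by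
  exact stmt_19_general n p
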